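/- Let n ≥ 6 be an integer and let G be a simple graph on n vertices such that every vertex u of G satisfies 2 ≤ d(u) ≤ n − 4 and the sum of the degrees of the neighbors of u satisfies Σ_{v∼u} d(v) ≤ n + 3·d(u) − 4. Then the Q-index of G satisfies q(G) ≤ n. -/

import Mathlib

open Matrix

/-- The signless Laplacian `Q(G) = D(G) + A(G)` of a finite simple graph `G`. -/
noncomputable def signlessLaplacian {V : Type*} [Fintype V] (G : SimpleGraph V) :
    Matrix V V ℝ :=
  letI := Classical.decEq V
  letI : DecidableRel G.Adj := Classical.decRel _
  Matrix.diagonal (fun v => (G.degree v : ℝ)) + G.adjMatrix ℝ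

/-- The `Q`-index of `G`: the largest eigenvalue of the signless Laplacian `Q(G)`. -/
noncomputable def qIndex {V : Type*} [Fintype V] (G : SimpleGraph V) : ℝ :=
  letI := Classical.decEq V
  sSup (spectrum ℝ (signlessLaplacian G))

/-!
Conjugating a matrix with nonnegative off-diagonal entries by `diagonal w`, `w > 0`, and applying
Gershgorin's theorem bounds its real eigenvalues by any `c` with `A w ≤ c w`. For the signless
Laplacian and `w = d` this is Merris's bound `q(G) ≤ max_u (d(u) + m(u))`, where `m(u)` is the mean
degree of the neighbors of `u`. The hypotheses give `m(u) ≤ (n + 3 d(u) - 4) / d(u)`, and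
`d(u) + m(u) ≤ n` then amounts to `(d(u) - 1) (n - 4 - d(u)) ≥ 0`.
-/

section WeightedGershgorin

variable {ι : Type*} [Fintype ι] [DecidableEq ι]

theorem spectrum_diagonal_inv_mul_mul_diagonal {K : Type*} [Field K] (A : Matrix ι ι K)
    {w : ι → K} (hw : ∀ i, w i ≠ 0) :
    spectrum K (diagonal w⁻¹ * A * diagonal w) = spectrum K A := by
  have left_inv : diagonal w⁻¹ * diagonal w = 1 := by simp [diagonal_mul_diagonal, hw]
  have right_inv : diagonal w * diagonal w⁻¹ = 1 := by simp [diagonal_mul_diagonal, hw]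
  exact spectrum.units_conjugate (a := A) (u := ⟨diagonal w⁻¹, diagonal w, left_inv, right_inv⟩)

variable {A : Matrix ι ι ℝ} {μ : ℝ}

theorem exists_le_sum_row_of_mem_spectrum (hA : ∀ i j, i ≠ j → 0 ≤ A i j)
    (hμ : μ ∈ spectrum ℝ A) : ∃ i, μ ≤ ∑ j, A i j := by
  rw [← spectrum_toLin', ← Module.End.hasEigenvalue_iff_mem_spectrum] at hμ
  obtain ⟨i, hi⟩ := eigenvalue_mem_ball hμ
  refine ⟨i, ?_⟩
  calc μ ≤ A i i + ∑ j ∈ Finset.univ.erase i, ‖A i j‖ := by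
        linarith [(abs_le.mp (mem_closedBall_iff_norm.mp hi)).2]
    _ = A i i + ∑ j ∈ Finset.univ.erase i, A i j := by
        congr 1
        exact Finset.sum_congr rfl fun j hj =>
          Real.norm_of_nonneg (hA i j (Finset.ne_of_mem_erase hj).symm)
    _ = ∑ j, A i j := Finset.add_sum_erase _ _ (Finset.mem_univ i)

theorem le_of_mem_spectrum_of_mulVec_le {w : ι → ℝ} {c : ℝ} (hA : ∀ i j, i ≠ j → 0 ≤ A i j)
    (hw : ∀ i, 0 < w i) (hc : ∀ i, (A *ᵥ w) i ≤ c * w i) (hμ : μ ∈ spectrum ℝ A) : μ ≤ c := by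
  rw [← spectrum_diagonal_inv_mul_mul_diagonal A fun i => (hw i).ne'] at hμ
  have entry (i j : ι) : (diagonal w⁻¹ * A * diagonal w) i j = (w i)⁻¹ * (A i j * w j) := by
    rw [mul_diagonal, diagonal_mul, Pi.inv_apply, mul_assoc]
  obtain ⟨i, hi⟩ := exists_le_sum_row_of_mem_spectrum
    (fun i j hij => by
      rw [entry]
      exact mul_nonneg (inv_nonneg.2 (hw i).le) (mul_nonneg (hA i j hij) (hw j).le)) hμ
  calc μ ≤ ∑ j, (w i)⁻¹ * (A i j * w j) := by simpa only [entry] using hi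
    _ = (w i)⁻¹ * (A *ᵥ w) i := (Finset.mul_sum _ _ _).symm
    _ ≤ c := (inv_mul_le_iff₀ (hw i)).2 (mul_comm c (w i) ▸ hc i)

end WeightedGershgorin

section SignlessLaplacian

variable {V : Type*} [Fintype V] (G : SimpleGraph V)

theorem isHermitian_signlessLaplacian : (signlessLaplacian G).IsHermitian := by
  classical
  exact (isHermitian_diagonal _).add (G.isHermitian_adjMatrix ℝ)

theorem signlessLaplacian_apply_nonneg (u v : V) : 0 ≤ signlessLaplacian G u v := by
  classical
  unfold signlessLaplacian
  rw [Matrix.add_apply, diagonal_apply, SimpleGraph.adjMatrix_apply]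
  positivity

theorem signlessLaplacian_mulVec_apply [DecidableRel G.Adj] (x : V → ℝ) (u : V) :
    (signlessLaplacian G *ᵥ x) u = G.degree u * x u + ∑ v ∈ G.neighborFinset u, x v := by
  classical
  unfold signlessLaplacian
  rw [add_mulVec, Pi.add_apply, mulVec_diagonal, SimpleGraph.adjMatrix_mulVec_apply]
  congr!

variable {G}

theorem qIndex_le_of_mulVec_le [Nonempty V] {w : V → ℝ} {c : ℝ} (hw : ∀ u, 0 < w u)
    (hc : ∀ u, (signlessLaplacian G *ᵥ w) u ≤ c * w u) : qIndex G ≤ c := by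
  let := Classical.decEq V
  have spectrum_nonempty : (spectrum ℝ (signlessLaplacian G)).Nonempty := by
    rw [(isHermitian_signlessLaplacian G).spectrum_real_eq_range_eigenvalues]
    exact Set.range_nonempty _
  exact csSup_le spectrum_nonempty fun _ hμ =>
    le_of_mem_spectrum_of_mulVec_le (fun u v _ => signlessLaplacian_apply_nonneg G u v) hw hc hμ

variable [DecidableRel G.Adj]

variable (G) in
/-- The average 2-degree `m(u)`: the mean degree of the neighbors of `u`. It is `0` when `u` is
isolated, by the convention `x / 0 = 0`. -/
noncomputable def averageTwoDegree (u : V) : ℝ :=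
  (∑ v ∈ G.neighborFinset u, (G.degree v : ℝ)) / G.degree u

theorem averageTwoDegree_mul_degree (u : V) :
    averageTwoDegree G u * G.degree u = ∑ v ∈ G.neighborFinset u, (G.degree v : ℝ) := by
  refine div_mul_cancel_of_imp fun hu => ?_
  rw [Nat.cast_eq_zero, ← SimpleGraph.card_neighborFinset_eq_degree, Finset.card_eq_zero] at hu
  rw [hu, Finset.sum_empty]

theorem qIndex_le_of_degree_add_averageTwoDegree_le [Nonempty V] {c : ℝ}
    (hc : ∀ u, G.degree u + averageTwoDegree G u ≤ c) : qIndex G ≤ c := by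
  -- The weights are the degrees, replaced by `1` at isolated vertices to keep them positive.
  refine qIndex_le_of_mulVec_le (w := fun u => max 1 (G.degree u : ℝ))
    (fun u => lt_max_of_lt_left one_pos) fun u => ?_
  have neighbor_weight : ∀ v ∈ G.neighborFinset u, max 1 (G.degree v : ℝ) = G.degree v := by
    intro v hv
    have : 0 < G.degree v :=
      (G.degree_pos_iff_exists_adj v).2 ⟨u, ((G.mem_neighborFinset u v).1 hv).symm⟩
    exact max_eq_right (by exact_mod_cast this)
  have averageTwoDegree_nonneg : 0 ≤ averageTwoDegree G u := by
    unfold averageTwoDegree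
    positivity
  calc (signlessLaplacian G *ᵥ fun u => max 1 (G.degree u : ℝ)) u
      = G.degree u * max 1 (G.degree u : ℝ) + averageTwoDegree G u * G.degree u := by
        rw [signlessLaplacian_mulVec_apply, Finset.sum_congr rfl neighbor_weight,
          averageTwoDegree_mul_degree]
    _ ≤ (G.degree u + averageTwoDegree G u) * max 1 (G.degree u : ℝ) := by
        rw [add_mul]
        gcongr
        exact le_max_right _ _
    _ ≤ c * max 1 (G.degree u : ℝ) := by
        gcongr
        exact hc u

theorem degree_add_averageTwoDegree_le {n : ℕ} {u : V} (hdeg : G.degree u + 4 ≤ n)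
    (hsum : ∑ v ∈ G.neighborFinset u, G.degree v + 4 ≤ n + 3 * G.degree u) :
    G.degree u + averageTwoDegree G u ≤ n := by
  have hdeg' : (G.degree u : ℝ) + 4 ≤ n := by exact_mod_cast hdeg
  have hsum' : averageTwoDegree G u * G.degree u + 4 ≤ n + 3 * G.degree u := by
    rw [averageTwoDegree_mul_degree]
    exact_mod_cast hsum
  rcases (G.degree u).eq_zero_or_pos with isolated | pos
  · simp only [averageTwoDegree, isolated, Nat.cast_zero, div_zero, add_zero, n.cast_nonneg]
  · have one_le : (1 : ℝ) ≤ G.degree u := by exact_mod_cast pos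
    have product_nonneg : 0 ≤ ((G.degree u : ℝ) - 1) * (n - 4 - G.degree u) :=
      mul_nonneg (by linarith) (by linarith)
    refine le_of_mul_le_mul_right ?_ (zero_lt_one.trans_le one_le)
    linarith

theorem stmt_0_general [Nonempty V] (n : ℕ) (hdeg : ∀ u, G.degree u + 4 ≤ n)
    (hsum : ∀ u, ∑ v ∈ G.neighborFinset u, G.degree v + 4 ≤ n + 3 * G.degree u) :
    qIndex G ≤ n :=
  qIndex_le_of_degree_add_averageTwoDegree_le fun u =>
    degree_add_averageTwoDegree_le (hdeg u) (hsum u)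

end SignlessLaplacian

/-- If `n ≥ 6` and every vertex `u` of `G` satisfies `2 ≤ d(u) ≤ n - 4` and
`∑_{v∼u} d(v) ≤ n + 3 d(u) - 4`, then `q(G) ≤ n`. -/
theorem stmt_0 (n : ℕ) (hn : 6 ≤ n) (G : SimpleGraph (Fin n)) [DecidableRel G.Adj]
    (hdeg : ∀ u, 2 ≤ G.degree u ∧ G.degree u ≤ n - 4)
    (hsum : ∀ u, ∑ v ∈ G.neighborFinset u, G.degree v ≤ n + 3 * G.degree u - 4) :
    qIndex G ≤ n := by
  have : Nonempty (Fin n) := ⟨⟨0, by omega⟩⟩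
  exact stmt_0_general n (fun u => Nat.add_le_of_le_sub (by omega) (hdeg u).2)
    fun u => Nat.add_le_of_le_sub (by omega) (hsum u)
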